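/- Let Γ be a finite extensive-form game with perfect recall. If β* is a Nash equilibrium in behavioral strategies, then there exist a behavioral strategy profile β̃* and a belief system μ* such that (β*, β̃*, μ*) satisfies the Nash characterization. -/

import Mathlib

open scoped Classical

noncomputable section

/-- A finite extensive-form game.  Actions are labelled by natural numbers drawn from the
finite pool `actFinset`; a history is the list of actions taken so far; players are `Fin n`
and `P h = none` means that the chance player moves after `h`.  The information sets of
player `i` are `Info i j` for `j < m i`, and `infoIdx h` is the index of the information
set containing a nonterminal history `h` at which some player moves.  Payoffs `u i h` are
relevant on terminal histories. -/
structure EFG where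
  n : ℕ
  actFinset : Finset ℕ
  H : Finset (List ℕ)
  P : List ℕ → Option (Fin n)
  fc : List ℕ → ℕ → ℝ
  m : Fin n → ℕ
  Info : Fin n → ℕ → Finset (List ℕ)
  infoIdx : List ℕ → ℕ
  u : Fin n → List ℕ → ℝ
  empty_mem : ([] : List ℕ) ∈ H
  prefixClosed : ∀ h ∈ H, ∀ h' : List ℕ, h' <+: h → h' ∈ H
  act_mem : ∀ (h : List ℕ) (a : ℕ), h ++ [a] ∈ H → a ∈ actFinset
  fc_nonneg : ∀ h a, 0 ≤ fc h a
  fc_sum : ∀ h ∈ H, P h = none → (∃ a, h ++ [a] ∈ H) →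
    ∑ a ∈ actFinset.filter (fun a => h ++ [a] ∈ H), fc h a = 1
  info_spec : ∀ (i : Fin n) (j : ℕ) (h : List ℕ), j < m i →
    (h ∈ Info i j ↔ h ∈ H ∧ P h = some i ∧ (∃ a, h ++ [a] ∈ H) ∧ infoIdx h = j)
  infoIdx_lt : ∀ (i : Fin n), ∀ h ∈ H, P h = some i → (∃ a, h ++ [a] ∈ H) → infoIdx h < m i
  info_nonempty : ∀ (i : Fin n) (j : ℕ), j < m i → (Info i j).Nonempty
  info_actions : ∀ (i : Fin n) (j : ℕ), j < m i → ∀ h ∈ Info i j, ∀ h' ∈ Info i j,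
    ∀ a : ℕ, (h ++ [a] ∈ H ↔ h' ++ [a] ∈ H)
  act_unique : ∀ (h h' : List ℕ) (a : ℕ), h ∈ H → h' ∈ H → h ++ [a] ∈ H → h' ++ [a] ∈ H →
    P h = P h' ∧ infoIdx h = infoIdx h'

namespace EFG

/-- Behavioral strategy profiles (player, information-set index, action ↦ probability). -/
abbrev Profile (G : EFG) : Type := Fin G.n → ℕ → ℕ → ℝ

/-- Belief systems (player, information-set index, history ↦ probability). -/
abbrev Belief (G : EFG) : Type := Fin G.n → ℕ → List ℕ → ℝ

variable (G : EFG)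

/-- The set `Z` of terminal histories. -/
def Zset : Finset (List ℕ) := G.H.filter fun h => ∀ a : ℕ, h ++ [a] ∉ G.H

/-- The set `A(h)` of actions available after a history. -/
def A (h : List ℕ) : Finset ℕ := G.actFinset.filter fun a => h ++ [a] ∈ G.H

/-- The common action set `A(I_i^j)` of an information set. -/
def infoA (i : Fin G.n) (j : ℕ) : Finset ℕ := (G.Info i j).sup fun h => G.A h

/-- A behavioral strategy of player `i`: a probability distribution on `A(I_i^j)` for
each information set `I_i^j`. -/
def IsBehStrategy (i : Fin G.n) (b : ℕ → ℕ → ℝ) : Prop :=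
  ∀ j < G.m i, (∀ a ∈ G.infoA i j, 0 ≤ b j a) ∧ ∑ a ∈ G.infoA i j, b j a = 1

/-- A behavioral strategy profile. -/
def IsBehProfile (β : G.Profile) : Prop := ∀ i : Fin G.n, G.IsBehStrategy i (β i)

/-- The probability of action `a` at history `h`: the chance distribution if the chance
player moves, and the mover's behavioral strategy otherwise. -/
def moveProb (β : G.Profile) (h : List ℕ) (a : ℕ) : ℝ :=
  (G.P h).elim (G.fc h a) fun i => β i (G.infoIdx h) a

/-- Player `i`'s record `X_i` of the information sets he encounters along a history and the
actions he takes at them, accumulated starting from the prefix `pre`. -/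
def recordFrom (i : Fin G.n) : List ℕ → List ℕ → List (ℕ × ℕ)
  | _, [] => []
  | pre, b :: rest =>
    (if G.P pre = some i then [(G.infoIdx pre, b)] else []) ++ recordFrom i (pre ++ [b]) rest

/-- Perfect recall. -/
def PerfectRecall : Prop :=
  ∀ (i : Fin G.n) (j : ℕ), j < G.m i →
    ∀ h ∈ G.Info i j, ∀ h' ∈ G.Info i j, G.recordFrom i [] h = G.recordFrom i [] h'

/-- Product of the move probabilities along `rest`, continuing from the prefix `pre`. -/
def prodAlong (β : G.Profile) : List ℕ → List ℕ → ℝ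
  | _, [] => 1
  | pre, b :: rest => G.moveProb β pre b * prodAlong β (pre ++ [b]) rest

/-- `ω(h|β)`: the probability that the moves along `h` are played under `β`. -/
def omega (β : G.Profile) (h : List ℕ) : ℝ := G.prodAlong β [] h

/-- `ω(I_i^j|β)`. -/
def omegaInfo (i : Fin G.n) (j : ℕ) (β : G.Profile) : ℝ := ∑ h ∈ G.Info i j, G.omega β h

/-- Product of the move probabilities along `rest` from `pre`, disregarding player `i`'s
own moves. -/
def prodAlongNot (i : Fin G.n) (β : G.Profile) : List ℕ → List ℕ → ℝ
  | _, [] => 1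
  | pre, b :: rest =>
    (if G.P pre = some i then 1 else G.moveProb β pre b) * prodAlongNot i β (pre ++ [b]) rest

/-- `S^i(h|β)`: probability of the moves along `h`, disregarding player `i`'s own moves. -/
def Sh (i : Fin G.n) (β : G.Profile) (h : List ℕ) : ℝ := G.prodAlongNot i β [] h

/-- `S^i(I_i^j|β)`. -/
def SInfo (i : Fin G.n) (j : ℕ) (β : G.Profile) : ℝ := ∑ h ∈ G.Info i j, G.Sh i β h

/-- Product of the move probabilities along `rest` from `pre`, with the factor at prefixes
lying in `I_i^j` omitted. -/
def prodAlongSkip (i : Fin G.n) (j : ℕ) (β : G.Profile) : List ℕ → List ℕ → ℝ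
  | _, [] => 1
  | pre, b :: rest =>
    (if pre ∈ G.Info i j then 1 else G.moveProb β pre b) * prodAlongSkip i j β (pre ++ [b]) rest

/-- `q ∈ M(a, I_i^j)`: `I_i^q` is a first information set of player `i` after action `a`
(every history in `I_i^q` contains `a`, with no later action of `a` lying in any action set
of player `i`). -/
def FirstAfter (i : Fin G.n) (a : ℕ) (q : ℕ) : Prop :=
  q < G.m i ∧ ∀ h ∈ G.Info i q, ∃ l₁ l₂ : List ℕ,
    h = l₁ ++ a :: l₂ ∧ ∀ b ∈ l₂, ∀ p < G.m i, b ∉ G.infoA i p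

/-- `q ∈ M(I_i^j) = ∪_{a ∈ A(I_i^j)} M(a, I_i^j)`. -/
def MInfo (i : Fin G.n) (j : ℕ) (q : ℕ) : Prop := ∃ a ∈ G.infoA i j, G.FirstAfter i a q

/-- `q ∈ Λ(a, I_i^j)`: every history in `I_i^q` contains the action `a`. -/
def LambdaSet (i : Fin G.n) (a : ℕ) (q : ℕ) : Prop :=
  q < G.m i ∧ ∀ h ∈ G.Info i q, ∃ l₁ l₂ : List ℕ, h = l₁ ++ a :: l₂

/-- `ϱ^i_{I_i^j}(β, β̃)`: replace player `i`'s component of `β` by that of `β̃` at every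
information set `I_i^q` such that some history in `I_i^q` contains an action of `A(I_i^j)`. -/
def rho (i : Fin G.n) (j : ℕ) (β βt : G.Profile) : G.Profile := fun p q =>
  if p = i ∧ ∃ h ∈ G.Info i q, ∃ b ∈ h, b ∈ G.infoA i j then βt i q else β p q

/-- A belief system: a probability distribution on each information set. -/
def IsBelief (μ : G.Belief) : Prop :=
  ∀ (i : Fin G.n) (j : ℕ), j < G.m i →
    (∀ h ∈ G.Info i j, 0 ≤ μ i j h) ∧ ∑ h ∈ G.Info i j, μ i j h = 1

/-- A self-independent belief system for `β`:
`S^i(I_i^j|β) · μ^i_{I_i^j}(h) = S^i(h|β)`. -/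
def SelfIndep (β : G.Profile) (μ : G.Belief) : Prop :=
  ∀ (i : Fin G.n) (j : ℕ), j < G.m i → ∀ h ∈ G.Info i j,
    G.SInfo i j β * μ i j h = G.Sh i β h

/-- Auxiliary for `ν`: scan `rest` from `pre` for the subhistory lying in `I_i^j`, then
weight by the belief and multiply the move probabilities of the remaining moves (the move
taken at the subhistory itself being skipped). -/
def nuAux (i : Fin G.n) (j : ℕ) (β : G.Profile) (w : List ℕ → ℝ) : List ℕ → List ℕ → ℝ
  | _, [] => 0
  | pre, b :: rest =>
    if pre ∈ G.Info i j then w pre * G.prodAlong β (pre ++ [b]) rest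
    else nuAux i j β w (pre ++ [b]) rest

/-- `ν^i_{I_i^j}(h | a, β^{-I_i^j}, μ)` (it does not involve the component of `β` at
`I_i^j`). -/
def nu (i : Fin G.n) (j : ℕ) (β : G.Profile) (μ : G.Belief) (h : List ℕ) : ℝ :=
  G.nuAux i j β (μ i j) [] h

/-- `u^i((a, β^{-I_i^j}) ∧ I_i^j)`. -/
def uWedgeAct (i : Fin G.n) (j : ℕ) (a : ℕ) (β : G.Profile) : ℝ :=
  ∑ h ∈ G.Zset.filter (fun h => a ∈ h), G.u i h * G.prodAlongSkip i j β [] h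

/-- `u^i(β ∧ I_i^j)`. -/
def uWedge (i : Fin G.n) (j : ℕ) (β : G.Profile) : ℝ :=
  ∑ h ∈ G.Zset.filter (fun h => ∃ b ∈ h, b ∈ G.infoA i j), G.u i h * G.omega β h

/-- The conditional expected payoff `u^i(a, β^{-I_i^j}, μ | I_i^j)`. -/
def uCond (i : Fin G.n) (j : ℕ) (a : ℕ) (β : G.Profile) (μ : G.Belief) : ℝ :=
  ∑ h ∈ G.Zset.filter (fun h => a ∈ h), G.u i h * G.nu i j β μ h

/-- The expected payoff `u^i(β)`. -/
def uExp (i : Fin G.n) (β : G.Profile) : ℝ := ∑ h ∈ G.Zset, G.u i h * G.omega β h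

/-- The profile obtained from `β` by replacing all of player `i`'s components by `b`. -/
def replace (β : G.Profile) (i : Fin G.n) (b : ℕ → ℕ → ℝ) : G.Profile :=
  fun p => if p = i then b else β p

/-- `β` is a Nash equilibrium in behavioral strategies. -/
def IsNash (β : G.Profile) : Prop :=
  G.IsBehProfile β ∧ ∀ (i : Fin G.n) (b : ℕ → ℕ → ℝ), G.IsBehStrategy i b →
    G.uExp i (G.replace β i b) ≤ G.uExp i β

/-- `(β, β̃, μ)` satisfies the Nash characterization (Definition 2 of the paper). -/
def NashChar (β βt : G.Profile) (μ : G.Belief) : Prop :=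
  (∀ (i : Fin G.n) (j : ℕ), j < G.m i → ∀ a' ∈ G.infoA i j, ∀ a'' ∈ G.infoA i j,
    G.uWedgeAct i j a' (G.rho i j β βt) < G.uWedgeAct i j a'' (G.rho i j β βt) →
    β i j a' = 0) ∧
  (∀ (i : Fin G.n) (j : ℕ), j < G.m i → ∀ a' ∈ G.infoA i j, ∀ a'' ∈ G.infoA i j,
    G.uCond i j a' (G.rho i j β βt) μ < G.uCond i j a'' (G.rho i j β βt) μ →
    βt i j a' = 0) ∧
  G.IsBelief μ ∧ G.SelfIndep β μ

/-- `r` is the root of a subgame: every information set lies entirely inside or entirely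
outside the set of histories extending `r`. -/
def IsSubgameRoot (r : List ℕ) : Prop :=
  r ∈ G.H ∧ ∀ (i : Fin G.n) (j : ℕ), j < G.m i →
    (∀ h ∈ G.Info i j, r <+: h) ∨ ∀ h ∈ G.Info i j, ¬ r <+: h

/-- The depth `g` of the smallest subgame containing `A(I_i^j)` (the length of the longest
subgame root preceding every history of `I_i^j`). -/
def sgDepthInfo (i : Fin G.n) (j : ℕ) : ℕ :=
  (G.H.filter fun r => G.IsSubgameRoot r ∧ ∀ h ∈ G.Info i j, r <+: h).sup List.length

/-- The depth `q(h)` of the smallest subgame containing the last action of `h`. -/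
def sgDepthHist (h : List ℕ) : ℕ :=
  (G.H.filter fun r => G.IsSubgameRoot r ∧ r <+: h.dropLast).sup List.length

/-- `C^i_{I_i^j}(h|β)`: product of move probabilities along `h` within the smallest subgame
containing `A(I_i^j)`. -/
def Ch (i : Fin G.n) (j : ℕ) (β : G.Profile) (h : List ℕ) : ℝ :=
  G.prodAlong β (h.take (G.sgDepthInfo i j)) (h.drop (G.sgDepthInfo i j))

/-- `C^i_{I_i^j}(I_i^j|β)`. -/
def CInfo (i : Fin G.n) (j : ℕ) (β : G.Profile) : ℝ := ∑ h ∈ G.Info i j, G.Ch i j β h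

/-- `u^i((a, β^{-I_i^j}) ⋄ I_i^j)`. -/
def uDiamondAct (i : Fin G.n) (j : ℕ) (a : ℕ) (β : G.Profile) : ℝ :=
  ∑ h ∈ G.Zset.filter (fun h => a ∈ h), G.u i h *
    G.prodAlongSkip i j β (h.take (G.sgDepthInfo i j)) (h.drop (G.sgDepthInfo i j))

/-- `Y^i(h|β)`: like `S^i(h|β)` but within the smallest subgame containing the last action
of `h`. -/
def Yh (i : Fin G.n) (β : G.Profile) (h : List ℕ) : ℝ :=
  G.prodAlongNot i β (h.take (G.sgDepthHist h)) (h.drop (G.sgDepthHist h))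

/-- `Y^i(I_i^j|β)`. -/
def YInfo (i : Fin G.n) (j : ℕ) (β : G.Profile) : ℝ := ∑ h ∈ G.Info i j, G.Yh i β h

/-- The belief condition `Y^i(I_i^j|β) · μ^i_{I_i^j}(h) = Y^i(h|β)`. -/
def YConsistent (β : G.Profile) (μ : G.Belief) : Prop :=
  ∀ (i : Fin G.n) (j : ℕ), j < G.m i → ∀ h ∈ G.Info i j,
    G.YInfo i j β * μ i j h = G.Yh i β h

/-- The expected payoff of player `i` in the subgame rooted at `r` (payoffs of terminal
histories extending `r`, weighted by the move probabilities within the subgame). -/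
def uExpFrom (i : Fin G.n) (β : G.Profile) (r : List ℕ) : ℝ :=
  ∑ h ∈ G.Zset.filter (fun h => r <+: h), G.u i h * G.prodAlong β r (h.drop r.length)

/-- `β` is a subgame perfect equilibrium in behavioral strategies: its restriction to every
subgame is a Nash equilibrium in behavioral strategies of that subgame. -/
def IsSubgamePerfect (β : G.Profile) : Prop :=
  G.IsBehProfile β ∧ ∀ r : List ℕ, G.IsSubgameRoot r →
    ∀ (i : Fin G.n) (b : ℕ → ℕ → ℝ), G.IsBehStrategy i b →
      G.uExpFrom i (G.replace β i b) r ≤ G.uExpFrom i β r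

/-- `(β, β̃, μ)` satisfies the subgame perfect characterization (Definition 6 of the
paper). -/
def SubgameChar (β βt : G.Profile) (μ : G.Belief) : Prop :=
  (∀ (i : Fin G.n) (j : ℕ), j < G.m i → ∀ a' ∈ G.infoA i j, ∀ a'' ∈ G.infoA i j,
    G.uDiamondAct i j a' (G.rho i j β βt) < G.uDiamondAct i j a'' (G.rho i j β βt) →
    β i j a' = 0) ∧
  (∀ (i : Fin G.n) (j : ℕ), j < G.m i → ∀ a' ∈ G.infoA i j, ∀ a'' ∈ G.infoA i j,
    G.uCond i j a' (G.rho i j β βt) μ < G.uCond i j a'' (G.rho i j β βt) μ →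
    βt i j a' = 0) ∧
  G.IsBelief μ ∧ G.YConsistent β μ

/-- `(β, μ)` is a semi-sequential equilibrium. -/
def SemiSeqEq (β : G.Profile) (μ : G.Belief) : Prop :=
  G.IsBehProfile β ∧ G.IsBelief μ ∧ G.SelfIndep β μ ∧
  ∀ (i : Fin G.n) (j : ℕ), j < G.m i → ∀ a' ∈ G.infoA i j, ∀ a'' ∈ G.infoA i j,
    G.uCond i j a' β μ < G.uCond i j a'' β μ → β i j a' = 0

/-- `(β, μ)` is a subgame perfect semi-sequential equilibrium. -/
def SubgameSemiSeqEq (β : G.Profile) (μ : G.Belief) : Prop :=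
  G.IsBehProfile β ∧ G.IsBelief μ ∧ G.YConsistent β μ ∧
  ∀ (i : Fin G.n) (j : ℕ), j < G.m i → ∀ a' ∈ G.infoA i j, ∀ a'' ∈ G.infoA i j,
    G.uCond i j a' β μ < G.uCond i j a'' β μ → β i j a' = 0

/-- `d(I_i^j)`: the number of information sets of player `i` containing a prefix of some
history of `I_i^j` (counting `I_i^j` itself). -/
def dInfo (i : Fin G.n) (j : ℕ) : ℕ :=
  ((Finset.range (G.m i)).filter
    (fun q => ∃ h ∈ G.Info i j, ∃ p : List ℕ, p <+: h ∧ p ∈ G.Info i q)).card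

end EFG

namespace SeqForm

/-- Weight of a record under a behavioral strategy. -/
def wt (b : ℕ → ℕ → ℝ) (l : List (ℕ × ℕ)) : ℝ := (l.map (fun x => b x.1 x.2)).prod

/-- Contribution of `z` to the continuation value after record `p`. -/
def g {α : Type} (r : α → List (ℕ × ℕ)) (c : α → ℝ) (b : ℕ → ℕ → ℝ) (p : List (ℕ × ℕ))
    (z : α) : ℝ := if p <+: r z then c z * wt b ((r z).drop p.length) else 0

/-- Continuation value after record `p`. -/
def V {α : Type} (Z : Finset α) (r : α → List (ℕ × ℕ)) (c : α → ℝ) (b : ℕ → ℕ → ℝ)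
    (p : List (ℕ × ℕ)) : ℝ := ∑ z ∈ Z, g r c b p z

theorem wt_append (b : ℕ → ℕ → ℝ) (l t : List (ℕ × ℕ)) : wt b (l ++ t) = wt b l * wt b t := by
  simp [wt]

theorem wt_cons (b : ℕ → ℕ → ℝ) (x : ℕ × ℕ) (t : List (ℕ × ℕ)) :
    wt b (x :: t) = b x.1 x.2 * wt b t := by
  simp [wt]

theorem max_le {A : Finset ℕ} {y f : ℕ → ℝ} (hy0 : ∀ a ∈ A, 0 ≤ y a) (hy1 : ∑ a ∈ A, y a = 1)
    (hy : ∀ a' ∈ A, ∀ a'' ∈ A, f a' < f a'' → y a' = 0) (a : ℕ) (ha : a ∈ A) :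
    f a ≤ ∑ a' ∈ A, y a' * f a' := by
  have : f a = ∑ a' ∈ A, y a' * f a := by rw [← Finset.sum_mul, hy1, one_mul]
  rw [this]
  refine Finset.sum_le_sum fun a' ha' => ?_
  rcases lt_or_ge (f a') (f a) with h | h
  · rw [hy a' ha' a ha h]; simp
  · exact mul_le_mul_of_nonneg_left h (hy0 a' ha')

section
variable {α : Type} (Z : Finset α) (r : α → List (ℕ × ℕ)) (c : α → ℝ) (m : ℕ)
  (A : ℕ → Finset ℕ) (rc : ℕ → List (ℕ × ℕ))

theorem g_step (z : α)
    (hr : ∀ l q a t, r z = l ++ (q, a) :: t → q < m ∧ a ∈ A q ∧ l = rc q)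
    (b : ℕ → ℕ → ℝ) (p : List (ℕ × ℕ)) :
    g r c b p z = (if r z = p then c z else 0) +
      ∑ q ∈ Finset.range m, ∑ a ∈ A q, b q a * g r c b (p ++ [(q, a)]) z := by
  by_cases hp : p <+: r z
  · obtain ⟨s, hs⟩ := hp
    cases s with
    | nil =>
      have h0 : ∀ q a, g r c b (p ++ [(q, a)]) z = 0 := by
        intro q a
        rw [g, if_neg]
        intro h
        have := h.length_le
        rw [← hs] at this
        simp at this
      simp only [h0]
      simp only [List.append_nil] at hs
      simp [g, ← hs, wt]
    | cons x t =>
      obtain ⟨q0, a0⟩ := x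
      obtain ⟨h1, h2, h3⟩ := hr p q0 a0 t hs.symm
      have h0 : ∀ q a, g r c b (p ++ [(q, a)]) z =
          if (q, a) = (q0, a0) then c z * wt b t else 0 := by
        intro q a
        unfold g
        rw [← hs]
        by_cases hqa : (q, a) = (q0, a0)
        · rw [if_pos hqa, if_pos]
          · congr 2
            rw [show p ++ (q0, a0) :: t = (p ++ [(q,a)]) ++ t by simp [hqa]]
            simp
          · rw [hqa]; exact ⟨t, by simp⟩
        · rw [if_neg hqa, if_neg]
          rw [List.prefix_append_right_inj]
          intro h
          obtain ⟨t', ht'⟩ := h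
          simp at ht'
          exact hqa (by simp [ht'.1])
      have hne : r z ≠ p := by
        rw [← hs]; intro h
        have := congrArg List.length h
        simp at this
      rw [if_neg hne, zero_add]
      rw [Finset.sum_eq_single q0, Finset.sum_eq_single a0]
      · rw [h0, if_pos rfl, g, if_pos ⟨_, hs⟩, ← hs]
        simp [wt_cons]; ring
      · intro a _ ha
        rw [h0, if_neg (by simp [ha]), mul_zero]
      · intro h; exact absurd h2 h
      · intro q _ hq
        refine Finset.sum_eq_zero fun a _ => ?_
        rw [h0, if_neg (by simp [hq]), mul_zero]
      · intro h; exact absurd (Finset.mem_range.2 h1) h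
  · have h0 : ∀ q a, g r c b (p ++ [(q, a)]) z = 0 := by
      intro q a
      rw [g, if_neg]
      intro h
      exact hp ((List.prefix_append _ _).trans h)
    have hne : r z ≠ p := by
      rintro rfl; exact hp (List.prefix_refl _)
    rw [if_neg hne, g, if_neg hp]
    simp [h0]

theorem V_step
    (hr : ∀ z ∈ Z, ∀ l q a t, r z = l ++ (q, a) :: t → q < m ∧ a ∈ A q ∧ l = rc q)
    (b : ℕ → ℕ → ℝ) (p : List (ℕ × ℕ)) :
    V Z r c b p = (∑ z ∈ Z, if r z = p then c z else 0) +
      ∑ q ∈ Finset.range m, ∑ a ∈ A q, b q a * V Z r c b (p ++ [(q, a)]) := by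
  unfold V
  rw [Finset.sum_congr rfl fun z hz => g_step r c m A rc z (hr z hz) b p,
    Finset.sum_add_distrib]
  congr 1
  rw [Finset.sum_comm]
  refine Finset.sum_congr rfl fun q _ => ?_
  rw [Finset.sum_comm]
  refine Finset.sum_congr rfl fun a _ => ?_
  rw [Finset.mul_sum]

theorem V_off
    (hr : ∀ z ∈ Z, ∀ l q a t, r z = l ++ (q, a) :: t → q < m ∧ a ∈ A q ∧ l = rc q)
    (b : ℕ → ℕ → ℝ) (p : List (ℕ × ℕ)) (q a : ℕ) (hp : p ≠ rc q) :
    V Z r c b (p ++ [(q, a)]) = 0 := by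
  refine Finset.sum_eq_zero fun z hz => ?_
  rw [g, if_neg]
  rintro ⟨t, ht⟩
  exact hp (hr z hz p q a t (by simp [← ht])).2.2

/-- Distributions at every information set. -/
def Beh (b : ℕ → ℕ → ℝ) : Prop :=
  ∀ j < m, (∀ a ∈ A j, 0 ≤ b j a) ∧ ∑ a ∈ A j, b j a = 1

theorem V_opt
    (hr : ∀ z ∈ Z, ∀ l q a t, r z = l ++ (q, a) :: t → q < m ∧ a ∈ A q ∧ l = rc q)
    (bt : ℕ → ℕ → ℝ) (hbt : Beh m A bt)
    (hone : ∀ p, ∀ q < m, ∀ a' ∈ A q, ∀ a'' ∈ A q,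
      V Z r c bt (p ++ [(q, a')]) < V Z r c bt (p ++ [(q, a'')]) → bt q a' = 0)
    (b : ℕ → ℕ → ℝ) (hb : Beh m A b) :
    ∀ p, V Z r c b p ≤ V Z r c bt p := by
  suffices ∀ k p, Z.sup (fun z => (r z).length) < p.length + k →
      V Z r c b p ≤ V Z r c bt p from fun p => this (Z.sup (fun z => (r z).length) + 1) p (by omega)
  intro k
  induction k with
  | zero =>
    intro p hp
    have : ∀ b', V Z r c b' p = 0 := by
      intro b'
      refine Finset.sum_eq_zero fun z hz => ?_
      rw [g, if_neg]
      intro h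
      have h1 := h.length_le
      have h2 := Finset.le_sup (f := fun z => (r z).length) hz
      omega
    rw [this, this]
  | succ k ih =>
    intro p hp
    rw [V_step Z r c m A rc hr b p, V_step Z r c m A rc hr bt p]
    refine add_le_add le_rfl (Finset.sum_le_sum fun q hq => ?_)
    have hq := Finset.mem_range.1 hq
    have hM := max_le (hbt q hq).1 (hbt q hq).2 (hone p q hq)
    calc _ ≤ ∑ a ∈ A q, b q a * ∑ a ∈ A q, bt q a * V Z r c bt (p ++ [(q, a)]) := by
          refine Finset.sum_le_sum fun a ha => mul_le_mul_of_nonneg_left ?_ ((hb q hq).1 a ha)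
          refine le_trans (ih _ ?_) (hM a ha)
          rw [List.length_append, List.length_singleton]; omega
      _ = _ := by rw [← Finset.sum_mul, (hb q hq).2, one_mul]

theorem good_step
    (hr : ∀ z ∈ Z, ∀ l q a t, r z = l ++ (q, a) :: t → q < m ∧ a ∈ A q ∧ l = rc q)
    (bt : ℕ → ℕ → ℝ) (hbt : Beh m A bt)
    (hone : ∀ p, ∀ q < m, ∀ a' ∈ A q, ∀ a'' ∈ A q,
      V Z r c bt (p ++ [(q, a')]) < V Z r c bt (p ++ [(q, a'')]) → bt q a' = 0)
    (b : ℕ → ℕ → ℝ) (hb : Beh m A b) (p : List (ℕ × ℕ))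
    (hp : V Z r c bt p ≤ V Z r c b p) (q : ℕ) (hq : q < m) (a : ℕ) (ha : a ∈ A q)
    (hba : b q a ≠ 0) :
    V Z r c bt (p ++ [(q, a)]) ≤ V Z r c b (p ++ [(q, a)]) ∧
    ∀ a'' ∈ A q, V Z r c bt (p ++ [(q, a'')]) ≤ V Z r c bt (p ++ [(q, a)]) := by
  have hopt := V_opt Z r c m A rc hr bt hbt hone b hb
  have hM := fun q hq => max_le (hbt q hq).1 (hbt q hq).2 (hone p q hq)
  set M : ℕ → ℝ := fun q => ∑ a ∈ A q, bt q a * V Z r c bt (p ++ [(q, a)]) with hMdef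
  have hterm : ∀ q < m, ∀ a ∈ A q, V Z r c b (p ++ [(q, a)]) ≤ M q := fun q hq a ha =>
    le_trans (hopt _) (hM q hq a ha)
  have hsum : ∀ q < m, ∑ a ∈ A q, b q a * M q = M q := fun q hq => by
    rw [← Finset.sum_mul, (hb q hq).2, one_mul]
  have hkey : V Z r c b (p ++ [(q, a)]) = M q := by
    by_contra hne
    have hlt := lt_of_le_of_ne (hterm q hq a ha) hne
    have hpos := lt_of_le_of_ne ((hb q hq).1 a ha) (Ne.symm hba)
    refine absurd hp (not_le.2 ?_)
    rw [V_step Z r c m A rc hr b p, V_step Z r c m A rc hr bt p]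
    refine add_lt_add_of_le_of_lt le_rfl ?_
    refine Finset.sum_lt_sum (fun q hq => ?_) ⟨q, Finset.mem_range.2 hq, ?_⟩
    · have hq := Finset.mem_range.1 hq
      change _ ≤ M q
      rw [← hsum q hq]
      exact Finset.sum_le_sum fun a ha =>
        mul_le_mul_of_nonneg_left (hterm q hq a ha) ((hb q hq).1 a ha)
    · change _ < M q
      rw [← hsum q hq]
      exact Finset.sum_lt_sum (fun a ha =>
        mul_le_mul_of_nonneg_left (hterm q hq a ha) ((hb q hq).1 a ha))
        ⟨a, ha, mul_lt_mul_of_pos_left hlt hpos⟩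
  constructor
  · rw [hkey]; exact hM q hq a ha
  · intro a'' ha''
    refine le_trans (hM q hq a'' ha'') ?_
    change M q ≤ _
    rw [← hkey]; exact hopt _

/-- Goodness propagates along records played with nonzero probability. -/
theorem good_all
    (hr : ∀ z ∈ Z, ∀ l q a t, r z = l ++ (q, a) :: t → q < m ∧ a ∈ A q ∧ l = rc q)
    (bt : ℕ → ℕ → ℝ) (hbt : Beh m A bt)
    (hone : ∀ p, ∀ q < m, ∀ a' ∈ A q, ∀ a'' ∈ A q,
      V Z r c bt (p ++ [(q, a')]) < V Z r c bt (p ++ [(q, a'')]) → bt q a' = 0)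
    (b : ℕ → ℕ → ℝ) (hb : Beh m A b)
    (hnil : V Z r c bt [] ≤ V Z r c b []) :
    ∀ p : List (ℕ × ℕ), (∀ x ∈ p, x.1 < m ∧ x.2 ∈ A x.1) → wt b p ≠ 0 →
      V Z r c bt p ≤ V Z r c b p := by
  intro p
  induction p using List.reverseRecOn with
  | nil => intro _ _; exact hnil
  | append_singleton p x ih =>
    intro hx hw
    rw [wt_append] at hw
    have h1 := ih (fun y hy => hx y (by simp [hy])) (left_ne_zero_of_mul hw)
    have h2 := hx x (by simp)
    refine (good_step Z r c m A rc hr bt hbt hone b hb p h1 x.1 h2.1 x.2 h2.2 ?_).1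
    have := right_ne_zero_of_mul hw
    simpa [wt] using this

end

end SeqForm

namespace EFG
open SeqForm

variable (G : EFG)

/-- The common record of an information set. -/
def rc (i : Fin G.n) (j : ℕ) : List (ℕ × ℕ) :=
  if h : (G.Info i j).Nonempty then G.recordFrom i [] h.choose else []

theorem rc_eq (hPR : G.PerfectRecall) (i : Fin G.n) (j : ℕ) (hj : j < G.m i) (h : List ℕ)
    (hh : h ∈ G.Info i j) : G.recordFrom i [] h = G.rc i j := by
  have hne : (G.Info i j).Nonempty := ⟨h, hh⟩
  rw [rc, dif_pos hne]
  exact hPR i j hj h hh _ hne.choose_spec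

theorem prodAlong_eq (i : Fin G.n) (β : G.Profile) (pre rest : List ℕ) :
    G.prodAlong β pre rest = G.prodAlongNot i β pre rest * wt (β i) (G.recordFrom i pre rest) := by
  induction rest generalizing pre with
  | nil => simp [prodAlong, prodAlongNot, recordFrom, wt]
  | cons b rest ih =>
    rw [prodAlong, prodAlongNot, recordFrom, ih, wt_append]
    by_cases h : G.P pre = some i
    · simp [h, wt, moveProb]; ring
    · simp [h, wt]; ring

theorem prodAlongNot_congr (i : Fin G.n) (β γ : G.Profile) (hβ : ∀ p, p ≠ i → β p = γ p)
    (pre rest : List ℕ) :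
    G.prodAlongNot i β pre rest = G.prodAlongNot i γ pre rest := by
  induction rest generalizing pre with
  | nil => rfl
  | cons b rest ih =>
    rw [prodAlongNot, prodAlongNot, ih]
    by_cases h : G.P pre = some i
    · simp [h]
    · rw [if_neg h, if_neg h]
      congr 1
      unfold moveProb
      cases hp : G.P pre with
      | none => rfl
      | some p =>
        have : p ≠ i := by rintro rfl; exact h hp
        simp [hβ p this]

theorem prodAlongNot_append (i : Fin G.n) (β : G.Profile) (pre s t : List ℕ) :
    G.prodAlongNot i β pre (s ++ t) =
      G.prodAlongNot i β pre s * G.prodAlongNot i β (pre ++ s) t := by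
  induction s generalizing pre with
  | nil => simp [prodAlongNot]
  | cons b s ih =>
    rw [List.cons_append, prodAlongNot, prodAlongNot, ih]
    simp [mul_assoc]

theorem recordFrom_append (i : Fin G.n) (pre s t : List ℕ) :
    G.recordFrom i pre (s ++ t) = G.recordFrom i pre s ++ G.recordFrom i (pre ++ s) t := by
  induction s generalizing pre with
  | nil => simp [recordFrom]
  | cons b s ih =>
    rw [List.cons_append, recordFrom, recordFrom, ih]
    simp

theorem moveProb_nonneg (β : G.Profile) (hβ : G.IsBehProfile β) (h : List ℕ) (a : ℕ)
    (hh : h ++ [a] ∈ G.H) : 0 ≤ G.moveProb β h a := by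
  unfold moveProb
  cases hp : G.P h with
  | none => exact G.fc_nonneg h a
  | some i =>
    have hH : h ∈ G.H := G.prefixClosed _ hh _ (List.prefix_append _ _)
    have hlt := G.infoIdx_lt i h hH hp ⟨a, hh⟩
    refine (hβ i _ hlt).1 a ?_
    have hm : h ∈ G.Info i (G.infoIdx h) := (G.info_spec i _ h hlt).2 ⟨hH, hp, ⟨a, hh⟩, rfl⟩
    refine Finset.mem_sup.2 ⟨h, hm, ?_⟩
    exact Finset.mem_filter.2 ⟨G.act_mem h a hh, hh⟩

theorem prodAlongNot_nonneg (i : Fin G.n) (β : G.Profile) (hβ : G.IsBehProfile β)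
    (pre rest : List ℕ) (hh : pre ++ rest ∈ G.H) : 0 ≤ G.prodAlongNot i β pre rest := by
  induction rest generalizing pre with
  | nil => simp [prodAlongNot]
  | cons b rest ih =>
    rw [prodAlongNot]
    refine mul_nonneg ?_ (ih _ (by simpa using hh))
    split_ifs
    · exact zero_le_one
    · exact G.moveProb_nonneg β hβ pre b (G.prefixClosed _ hh _ ⟨rest, by simp⟩)

theorem mem_infoA (i : Fin G.n) (j : ℕ) (hj : j < G.m i) (a : ℕ) :
    a ∈ G.infoA i j ↔ ∃ h ∈ G.Info i j, h ++ [a] ∈ G.H := by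
  constructor
  · intro ha
    obtain ⟨h, hh, ha⟩ := Finset.mem_sup.1 ha
    exact ⟨h, hh, (Finset.mem_filter.1 ha).2⟩
  · rintro ⟨h, hh, ha⟩
    exact Finset.mem_sup.2 ⟨h, hh, Finset.mem_filter.2 ⟨G.act_mem h a ha, ha⟩⟩

theorem infoA_nonempty (i : Fin G.n) (j : ℕ) (hj : j < G.m i) : (G.infoA i j).Nonempty := by
  obtain ⟨h, hh⟩ := G.info_nonempty i j hj
  obtain ⟨_, _, ⟨a, ha⟩, _⟩ := (G.info_spec i j h hj).1 hh
  exact ⟨a, (G.mem_infoA i j hj a).2 ⟨h, hh, ha⟩⟩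

/-- Splitting a record at one of its entries. -/
theorem record_split (i : Fin G.n) (rest pre : List ℕ) (l : List (ℕ × ℕ)) (q a : ℕ)
    (t : List (ℕ × ℕ)) (h : G.recordFrom i pre rest = l ++ (q, a) :: t) :
    ∃ h₁ h₂, rest = h₁ ++ a :: h₂ ∧ G.P (pre ++ h₁) = some i ∧ G.infoIdx (pre ++ h₁) = q ∧
      G.recordFrom i pre h₁ = l := by
  induction rest generalizing pre l with
  | nil => simp [recordFrom] at h
  | cons b rest ih =>
    rw [recordFrom] at h
    by_cases hp : G.P pre = some i
    · rw [if_pos hp] at h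
      cases l with
      | nil =>
        simp at h
        exact ⟨[], rest, by simp [h.1.2], by simpa using hp, by simpa using h.1.1, rfl⟩
      | cons x l =>
        simp at h
        obtain ⟨h₁, h₂, e1, e2, e3, e4⟩ := ih (pre ++ [b]) l h.2
        refine ⟨b :: h₁, h₂, by simp [e1], by simpa using e2, by simpa using e3, ?_⟩
        rw [recordFrom, if_pos hp, e4, ← h.1]; rfl
    · rw [if_neg hp, List.nil_append] at h
      obtain ⟨h₁, h₂, e1, e2, e3, e4⟩ := ih (pre ++ [b]) l h
      refine ⟨b :: h₁, h₂, by simp [e1], by simpa using e2, by simpa using e3, ?_⟩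
      rw [recordFrom, if_neg hp, e4]; rfl

theorem record_entry (hPR : G.PerfectRecall) (i : Fin G.n) (h : List ℕ) (hh : h ∈ G.H)
    (l : List (ℕ × ℕ)) (q a : ℕ) (t : List (ℕ × ℕ))
    (hr : G.recordFrom i [] h = l ++ (q, a) :: t) :
    q < G.m i ∧ a ∈ G.infoA i q ∧ l = G.rc i q ∧
      ∃ h₁ h₂, h = h₁ ++ a :: h₂ ∧ h₁ ∈ G.Info i q := by
  obtain ⟨h₁, h₂, e1, e2, e3, e4⟩ := G.record_split i h [] l q a t hr
  simp only [List.nil_append] at e2 e3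
  have hH : h₁ ++ [a] ∈ G.H := G.prefixClosed _ hh _ ⟨h₂, by simp [e1]⟩
  have hH1 : h₁ ∈ G.H := G.prefixClosed _ hh _ ⟨a :: h₂, by simp [e1]⟩
  have hlt := G.infoIdx_lt i h₁ hH1 e2 ⟨a, hH⟩
  rw [e3] at hlt
  have hm : h₁ ∈ G.Info i q := (G.info_spec i _ h₁ hlt).2 ⟨hH1, e2, ⟨a, hH⟩, e3⟩
  exact ⟨hlt, (G.mem_infoA i q hlt a).2 ⟨h₁, hm, hH⟩,
    by rw [← e4, G.rc_eq hPR i q hlt h₁ hm], h₁, h₂, e1, hm⟩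

/-- A history through an action of `A(I_i^j)` has the corresponding record. -/
theorem record_of_mem (hPR : G.PerfectRecall) (i : Fin G.n) (j : ℕ) (hj : j < G.m i) (a : ℕ)
    (ha : a ∈ G.infoA i j) (h : List ℕ) (hh : h ∈ G.H) (hah : a ∈ h) :
    ∃ t, G.recordFrom i [] h = G.rc i j ++ (j, a) :: t := by
  obtain ⟨h₁, h₂, e⟩ := List.append_of_mem hah
  obtain ⟨h', hh', ha'⟩ := (G.mem_infoA i j hj a).1 ha
  have hs' := (G.info_spec i j h' hj).1 hh'
  have hH : h₁ ++ [a] ∈ G.H := G.prefixClosed _ hh _ ⟨h₂, by simp [e]⟩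
  have hH1 : h₁ ∈ G.H := G.prefixClosed _ hh _ ⟨a :: h₂, by simp [e]⟩
  obtain ⟨hP, hI⟩ := G.act_unique h₁ h' a hH1 hs'.1 hH ha'
  rw [hs'.2.1] at hP
  rw [hs'.2.2.2] at hI
  have hm : h₁ ∈ G.Info i j := (G.info_spec i j h₁ hj).2 ⟨hH1, hP, ⟨a, hH⟩, hI⟩
  refine ⟨G.recordFrom i (h₁ ++ [a]) h₂, ?_⟩
  rw [e, recordFrom_append, G.rc_eq hPR i j hj h₁ hm, List.nil_append, recordFrom, if_pos hP, hI]
  rfl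

theorem mem_iff_record (hPR : G.PerfectRecall) (i : Fin G.n) (j : ℕ) (hj : j < G.m i) (a : ℕ)
    (ha : a ∈ G.infoA i j) (h : List ℕ) (hh : h ∈ G.H) :
    a ∈ h ↔ G.rc i j ++ [(j, a)] <+: G.recordFrom i [] h := by
  constructor
  · intro hah
    obtain ⟨t, ht⟩ := G.record_of_mem hPR i j hj a ha h hh hah
    exact ⟨t, by simp [ht]⟩
  · rintro ⟨t, ht⟩
    obtain ⟨_, _, _, h₁, h₂, e, _⟩ := G.record_entry hPR i h hh (G.rc i j) j a t (by simp [← ht])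
    simp [e]

/-- Followers of `I_i^j` have strictly longer records. -/
theorem rc_lt (hPR : G.PerfectRecall) (i : Fin G.n) (j q : ℕ) (hj : j < G.m i) (hq : q < G.m i)
    (hf : ∃ h ∈ G.Info i q, ∃ b ∈ h, b ∈ G.infoA i j) :
    (G.rc i j).length < (G.rc i q).length := by
  obtain ⟨h, hh, b, hb, hbA⟩ := hf
  obtain ⟨t, ht⟩ := G.record_of_mem hPR i j hj b hbA h ((G.info_spec i q h hq).1 hh).1 hb
  rw [G.rc_eq hPR i q hq h hh] at ht
  rw [ht]; simp

/-- Structure of a record through `(j, a)` . -/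
theorem tail_spec (hPR : G.PerfectRecall) (i : Fin G.n) (z : List ℕ) (hz : z ∈ G.H) (j a : ℕ)
    (t : List (ℕ × ℕ)) (hr : G.recordFrom i [] z = G.rc i j ++ (j, a) :: t) :
    (∀ x ∈ G.rc i j, x.1 < G.m i ∧ x.2 ∈ G.infoA i x.1 ∧ x.1 ≠ j ∧
      ¬ ∃ h ∈ G.Info i x.1, ∃ b ∈ h, b ∈ G.infoA i j) ∧
    (∀ x ∈ t, x.1 ≠ j ∧ ∃ h ∈ G.Info i x.1, ∃ b ∈ h, b ∈ G.infoA i j) := by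
  obtain ⟨hj, ha, _, _⟩ := G.record_entry hPR i z hz _ j a t hr
  constructor
  · rintro ⟨q, b⟩ hx
    obtain ⟨l1, l2, e⟩ := List.append_of_mem hx
    obtain ⟨hq, hb, e1, _⟩ := G.record_entry hPR i z hz l1 q b (l2 ++ (j, a) :: t)
      (by rw [hr, e]; simp)
    have hlen : (G.rc i q).length < (G.rc i j).length := by rw [e, ← e1]; simp
    refine ⟨hq, hb, ?_, ?_⟩
    · rintro rfl; simp at hlen
    · intro hf
      have := G.rc_lt hPR i j q hj hq hf
      omega
  · rintro ⟨q, b⟩ hx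
    obtain ⟨l1, l2, e⟩ := List.append_of_mem hx
    obtain ⟨hq, hb, e1, h₁, h₂, e2, hm⟩ := G.record_entry hPR i z hz
      (G.rc i j ++ (j, a) :: l1) q b l2 (by rw [hr, e]; simp)
    refine ⟨?_, h₁, hm, a, ?_, ha⟩
    · rintro rfl
      have := congrArg List.length e1
      simp at this
    · have h1H := ((G.info_spec i q h₁ hq).1 hm).1
      refine (G.mem_iff_record hPR i j hj a ha h₁ h1H).2 ?_
      rw [G.rc_eq hPR i q hq h₁ hm, ← e1]
      exact ⟨l1, by simp⟩

theorem skip_eq (i : Fin G.n) (j : ℕ) (hj : j < G.m i) (γ : G.Profile) (pre rest : List ℕ)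
    (hh : pre ++ rest ∈ G.H) :
    G.prodAlongSkip i j γ pre rest = G.prodAlongNot i γ pre rest *
      wt (fun q a => if q = j then 1 else γ i q a) (G.recordFrom i pre rest) := by
  induction rest generalizing pre with
  | nil => simp [prodAlongSkip, prodAlongNot, recordFrom, wt]
  | cons b rest ih =>
    rw [prodAlongSkip, prodAlongNot, recordFrom, ih _ (by simpa using hh), wt_append]
    have hpH : pre ∈ G.H := G.prefixClosed _ hh _ (List.prefix_append _ _)
    have hpb : pre ++ [b] ∈ G.H := G.prefixClosed _ hh _ ⟨rest, by simp⟩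
    have hiff : pre ∈ G.Info i j ↔ G.P pre = some i ∧ G.infoIdx pre = j := by
      rw [G.info_spec i j pre hj]
      exact ⟨fun h => ⟨h.2.1, h.2.2.2⟩, fun h => ⟨hpH, h.1, ⟨b, hpb⟩, h.2⟩⟩
    simp only [hiff]
    by_cases h : G.P pre = some i
    · by_cases h' : G.infoIdx pre = j
      · simp [h, h', wt]
      · simp [h, h', wt, moveProb]; ring
    · simp [h, wt]; ring

theorem nuAux_eq (i : Fin G.n) (j : ℕ) (hj : j < G.m i) (γ : G.Profile) (w : List ℕ → ℝ) (S : ℝ)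
    (hw : ∀ h ∈ G.Info i j, S * w h = G.Sh i γ h) (a : ℕ) (t : List (ℕ × ℕ))
    (rest pre : List ℕ) (hh : pre ++ rest ∈ G.H) (l : List (ℕ × ℕ)) (hl : ∀ x ∈ l, x.1 ≠ j)
    (hr : G.recordFrom i pre rest = l ++ (j, a) :: t) :
    S * G.nuAux i j γ w pre rest = G.Sh i γ (pre ++ rest) * wt (γ i) t := by
  induction rest generalizing pre l with
  | nil => simp [recordFrom] at hr
  | cons b rest ih =>
    have hpH : pre ∈ G.H := G.prefixClosed _ hh _ (List.prefix_append _ _)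
    have hpb : pre ++ [b] ∈ G.H := G.prefixClosed _ hh _ ⟨rest, by simp⟩
    have hiff : pre ∈ G.Info i j ↔ G.P pre = some i ∧ G.infoIdx pre = j := by
      rw [G.info_spec i j pre hj]
      exact ⟨fun h => ⟨h.2.1, h.2.2.2⟩, fun h => ⟨hpH, h.1, ⟨b, hpb⟩, h.2⟩⟩
    have hreassoc : pre ++ b :: rest = (pre ++ [b]) ++ rest := by simp
    rw [nuAux]
    rw [recordFrom] at hr
    by_cases hm : pre ∈ G.Info i j
    · rw [if_pos hm]
      obtain ⟨hP, hI⟩ := hiff.1 hm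
      rw [if_pos hP, hI] at hr
      cases l with
      | cons x l =>
        simp at hr
        exact absurd (by rw [← hr.1]) (hl x (by simp))
      | nil =>
        simp at hr
        rw [← mul_assoc, hw pre hm, G.prodAlong_eq i, hr.2]
        unfold Sh
        rw [prodAlongNot_append, prodAlongNot, List.nil_append, if_pos hP]
        ring
    · rw [if_neg hm, hreassoc]
      by_cases hP : G.P pre = some i
      · rw [if_pos hP] at hr
        cases l with
        | cons x l =>
          simp at hr
          exact ih _ (by simpa using hh) l (fun y hy => hl y (by simp [hy])) hr.2
        | nil =>
          simp at hr
          exact absurd (hiff.2 ⟨hP, hr.1.1⟩) hm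
      · rw [if_neg hP, List.nil_append] at hr
        exact ih _ (by simpa using hh) l hl hr

/-- Payoff weights of player `i`, disregarding his own moves. -/
def cw (i : Fin G.n) (β : G.Profile) (z : List ℕ) : ℝ := G.u i z * G.Sh i β z

/-- Continuation values of player `i`. -/
def Val (i : Fin G.n) (β : G.Profile) (b : ℕ → ℕ → ℝ) (p : List (ℕ × ℕ)) : ℝ :=
  V G.Zset (G.recordFrom i []) (G.cw i β) b p

theorem wt_congr (b b' : ℕ → ℕ → ℝ) (l : List (ℕ × ℕ)) (h : ∀ x ∈ l, b x.1 x.2 = b' x.1 x.2) :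
    wt b l = wt b' l := by
  unfold wt
  rw [List.map_congr_left h]

theorem uExp_eq (i : Fin G.n) (β γ : G.Profile) (h : ∀ p, p ≠ i → γ p = β p) :
    G.uExp i γ = G.Val i β (γ i) [] := by
  unfold uExp Val V
  refine Finset.sum_congr rfl fun z _ => ?_
  rw [omega, G.prodAlong_eq i, G.prodAlongNot_congr i γ β h]
  simp [g, cw, Sh]; ring

theorem rho_ne (i : Fin G.n) (j : ℕ) (β βt : G.Profile) (p : Fin G.n) (hp : p ≠ i) :
    G.rho i j β βt p = β p := by
  funext q
  simp [rho, hp]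

theorem Zset_H {z : List ℕ} (hz : z ∈ G.Zset) : z ∈ G.H := (Finset.mem_filter.1 hz).1

theorem rho_rc (hPR : G.PerfectRecall) (i : Fin G.n) (β βt : G.Profile)
    (z : List ℕ) (hz : z ∈ G.H) (j a : ℕ)
    (t : List (ℕ × ℕ)) (hr : G.recordFrom i [] z = G.rc i j ++ (j, a) :: t) :
    wt (G.rho i j β βt i) t = wt (βt i) t := by
  refine wt_congr _ _ _ fun x hx => ?_
  have := ((G.tail_spec hPR i z hz j a t hr).2 x hx).2
  unfold rho
  rw [if_pos ⟨rfl, this⟩]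

theorem g_val (i : Fin G.n) (β : G.Profile) (b : ℕ → ℕ → ℝ) (z : List ℕ) (j a : ℕ)
    (t : List (ℕ × ℕ)) (hr : G.recordFrom i [] z = G.rc i j ++ (j, a) :: t) :
    g (G.recordFrom i []) (G.cw i β) b (G.rc i j ++ [(j, a)]) z = G.cw i β z * wt b t := by
  have : G.recordFrom i [] z = (G.rc i j ++ [(j, a)]) ++ t := by simp [hr]
  rw [g, this, if_pos (List.prefix_append _ _), List.drop_left]

theorem Val_filter (hPR : G.PerfectRecall) (i : Fin G.n) (j : ℕ) (hj : j < G.m i) (a : ℕ)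
    (ha : a ∈ G.infoA i j) (β : G.Profile) (b : ℕ → ℕ → ℝ) :
    G.Val i β b (G.rc i j ++ [(j, a)]) = ∑ z ∈ G.Zset.filter (fun h => a ∈ h),
      g (G.recordFrom i []) (G.cw i β) b (G.rc i j ++ [(j, a)]) z := by
  rw [Val, V, Finset.sum_filter]
  refine Finset.sum_congr rfl fun z hz => ?_
  split_ifs with h
  · rfl
  · rw [g, if_neg]
    rwa [← G.mem_iff_record hPR i j hj a ha z (G.Zset_H hz)]

theorem uWedgeAct_eq (hPR : G.PerfectRecall) (i : Fin G.n) (j : ℕ) (hj : j < G.m i) (a : ℕ)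
    (ha : a ∈ G.infoA i j) (β βt : G.Profile) :
    G.uWedgeAct i j a (G.rho i j β βt) =
      wt (β i) (G.rc i j) * G.Val i β (βt i) (G.rc i j ++ [(j, a)]) := by
  rw [G.Val_filter hPR i j hj a ha, uWedgeAct, Finset.mul_sum]
  refine Finset.sum_congr rfl fun z hz => ?_
  obtain ⟨hz, haz⟩ := Finset.mem_filter.1 hz
  have hzH := G.Zset_H hz
  obtain ⟨t, ht⟩ := G.record_of_mem hPR i j hj a ha z hzH haz
  rw [G.g_val i β _ z j a t ht, G.skip_eq i j hj _ [] z hzH, ht, wt_append, wt_cons,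
    G.prodAlongNot_congr i _ β (G.rho_ne i j β βt), cw, Sh, ← G.rho_rc hPR i β βt z hzH j a t ht]
  obtain ⟨h1, h2⟩ := G.tail_spec hPR i z hzH j a t ht
  rw [wt_congr (fun q a => if q = j then 1 else G.rho i j β βt i q a) (β i) (G.rc i j),
    wt_congr (fun q a => if q = j then 1 else G.rho i j β βt i q a) (G.rho i j β βt i) t]
  · simp; ring
  · intro x hx
    simp [(h2 x hx).1]
  · intro x hx
    obtain ⟨_, _, h3, h4⟩ := h1 x hx
    simp only [if_neg h3]
    unfold rho
    rw [if_neg (fun h => h4 h.2)]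

theorem uCond_eq (hPR : G.PerfectRecall) (i : Fin G.n) (j : ℕ) (hj : j < G.m i) (a : ℕ)
    (ha : a ∈ G.infoA i j) (β βt : G.Profile) (μ : G.Belief) (hμ : G.SelfIndep β μ) :
    G.SInfo i j β * G.uCond i j a (G.rho i j β βt) μ =
      G.Val i β (βt i) (G.rc i j ++ [(j, a)]) := by
  rw [G.Val_filter hPR i j hj a ha, uCond, Finset.mul_sum]
  refine Finset.sum_congr rfl fun z hz => ?_
  obtain ⟨hz, haz⟩ := Finset.mem_filter.1 hz
  have hzH := G.Zset_H hz
  obtain ⟨t, ht⟩ := G.record_of_mem hPR i j hj a ha z hzH haz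
  have hSh : ∀ h, G.Sh i (G.rho i j β βt) h = G.Sh i β h := fun h =>
    G.prodAlongNot_congr i _ β (G.rho_ne i j β βt) [] h
  have := G.nuAux_eq i j hj (G.rho i j β βt) (μ i j) (G.SInfo i j β)
    (fun h hh => by rw [hSh]; exact hμ i j hj h hh) a t z [] hzH (G.rc i j)
    (fun x hx => ((G.tail_spec hPR i z hzH j a t ht).1 x hx).2.2.1) ht
  rw [G.g_val i β _ z j a t ht, cw, nu, mul_left_comm, this, hSh,
    G.rho_rc hPR i β βt z hzH j a t ht]
  simp; ring

theorem exists_belief (β : G.Profile) (hβ : G.IsBehProfile β) :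
    ∃ μ : G.Belief, G.IsBelief μ ∧ G.SelfIndep β μ := by
  have hnn : ∀ i j, j < G.m i → ∀ h ∈ G.Info i j, 0 ≤ G.Sh i β h := fun i j hj h hh =>
    G.prodAlongNot_nonneg i β hβ [] h ((G.info_spec i j h hj).1 hh).1
  refine ⟨fun i j h => if G.SInfo i j β = 0 then ((G.Info i j).card : ℝ)⁻¹
    else G.Sh i β h / G.SInfo i j β, ?_, ?_⟩
  · intro i j hj
    by_cases hS : G.SInfo i j β = 0
    · simp only [hS, if_true]
      refine ⟨fun h hh => by positivity, ?_⟩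
      have : ((G.Info i j).card : ℝ) ≠ 0 := by
        exact_mod_cast (Finset.card_pos.2 (G.info_nonempty i j hj)).ne'
      simp [this]
    · simp only [hS, if_false]
      refine ⟨fun h hh => div_nonneg (hnn i j hj h hh) (Finset.sum_nonneg (hnn i j hj)), ?_⟩
      rw [← Finset.sum_div]
      exact div_self hS
  · intro i j hj h hh
    by_cases hS : G.SInfo i j β = 0
    · have := (Finset.sum_eq_zero_iff_of_nonneg (hnn i j hj)).1 hS h hh
      rw [this, hS, zero_mul]
    · simp only [hS, if_false]
      field_simp

theorem exists_bt (hPR : G.PerfectRecall) (β : G.Profile) (hβ : G.IsBehProfile β)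
    (μ : G.Belief) : ∃ βt : G.Profile, G.IsBehProfile βt ∧
    ∀ (i : Fin G.n) (j : ℕ), j < G.m i → ∀ a' ∈ G.infoA i j, ∀ a'' ∈ G.infoA i j,
    G.uCond i j a' (G.rho i j β βt) μ < G.uCond i j a'' (G.rho i j β βt) μ →
    βt i j a' = 0 := by
  set N : ℕ := Finset.univ.sup fun i : Fin G.n =>
    (Finset.range (G.m i)).sup fun j => (G.rc i j).length with hN
  suffices ∀ k, ∃ βt : G.Profile, G.IsBehProfile βt ∧
      ∀ (i : Fin G.n) (j : ℕ), j < G.m i → N < (G.rc i j).length + k →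
      ∀ a' ∈ G.infoA i j, ∀ a'' ∈ G.infoA i j,
      G.uCond i j a' (G.rho i j β βt) μ < G.uCond i j a'' (G.rho i j β βt) μ →
      βt i j a' = 0 by
    obtain ⟨βt, h1, h2⟩ := this (N + 1)
    exact ⟨βt, h1, fun i j hj => h2 i j hj (by omega)⟩
  intro k
  induction k with
  | zero =>
    refine ⟨β, hβ, fun i j hj hlt => ?_⟩
    exfalso
    have h1 : (G.rc i j).length ≤ (Finset.range (G.m i)).sup fun j => (G.rc i j).length :=
      Finset.le_sup (f := fun j => (G.rc i j).length) (Finset.mem_range.2 hj)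
    have h2 : ((Finset.range (G.m i)).sup fun j => (G.rc i j).length) ≤ N :=
      Finset.le_sup (f := fun i : Fin G.n =>
        (Finset.range (G.m i)).sup fun j => (G.rc i j).length) (Finset.mem_univ i)
    omega
  | succ k ih =>
    obtain ⟨βt, hbt, hk⟩ := ih
    have hmax : ∀ (i : Fin G.n) (j : ℕ), ∃ a, j < G.m i → a ∈ G.infoA i j ∧
        ∀ a' ∈ G.infoA i j, G.uCond i j a' (G.rho i j β βt) μ ≤
          G.uCond i j a (G.rho i j β βt) μ := by
      intro i j
      by_cases hj : j < G.m i
      · obtain ⟨a, ha, h⟩ := Finset.exists_max_image (G.infoA i j)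
          (fun a => G.uCond i j a (G.rho i j β βt) μ) (G.infoA_nonempty i j hj)
        exact ⟨a, fun _ => ⟨ha, h⟩⟩
      · exact ⟨0, fun h => absurd h hj⟩
    choose am ham using hmax
    let βn : G.Profile := fun i j => if j < G.m i ∧ N = (G.rc i j).length + k then
      (fun a => if a = am i j then 1 else 0) else βt i j
    have hrho : ∀ i j, j < G.m i → N < (G.rc i j).length + (k + 1) →
        G.rho i j β βn = G.rho i j β βt := by
      intro i j hj hlt
      funext p q
      unfold rho
      split_ifs with hc
      · have : ¬ (q < G.m i ∧ N = (G.rc i q).length + k) := by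
          rintro ⟨hq, hNq⟩
          have := G.rc_lt hPR i j q hj hq hc.2
          omega
        exact if_neg this
      · rfl
    refine ⟨βn, ?_, ?_⟩
    · intro i j hj
      by_cases hc : j < G.m i ∧ N = (G.rc i j).length + k
      · have he : βn i j = fun a => if a = am i j then 1 else 0 := if_pos hc
        rw [he]
        refine ⟨fun a _ => by positivity, ?_⟩
        simp [(ham i j hj).1]
      · have he : βn i j = βt i j := if_neg hc
        rw [he]
        exact hbt i j hj
    · intro i j hj hlt a' ha' a'' ha'' hu
      rw [hrho i j hj hlt] at hu
      by_cases hc : j < G.m i ∧ N = (G.rc i j).length + k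
      · have he : βn i j = fun a => if a = am i j then 1 else 0 := if_pos hc
        rw [he]
        refine if_neg ?_
        rintro rfl
        exact absurd hu (not_lt.2 ((ham i j hj).2 a'' ha''))
      · have he : βn i j = βt i j := if_neg hc
        rw [he]
        exact hk i j hj (by
          have : N ≠ (G.rc i j).length + k := fun h => hc ⟨hj, h⟩
          omega) a' ha' a'' ha'' hu

theorem nash_main (hPR : G.PerfectRecall) (β : G.Profile) (hβ : G.IsNash β) :
    ∃ (βt : G.Profile) (μ : G.Belief), G.IsBehProfile βt ∧ G.NashChar β βt μ := by
  obtain ⟨μ, hμ1, hμ2⟩ := G.exists_belief β hβ.1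
  obtain ⟨βt, hbt, h2⟩ := G.exists_bt hPR β hβ.1 μ
  refine ⟨βt, μ, hbt, ?_, h2, hμ1, hμ2⟩
  intro i j hj a' ha' a'' ha'' hlt
  have hr : ∀ z ∈ G.Zset, ∀ l q a t, G.recordFrom i [] z = l ++ (q, a) :: t →
      q < G.m i ∧ a ∈ G.infoA i q ∧ l = G.rc i q := by
    intro z hz l q a t h
    obtain ⟨e1, e2, e3, _⟩ := G.record_entry hPR i z (G.Zset_H hz) l q a t h
    exact ⟨e1, e2, e3⟩
  have hone : ∀ p, ∀ q < G.m i, ∀ a' ∈ G.infoA i q, ∀ a'' ∈ G.infoA i q,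
      V G.Zset (G.recordFrom i []) (G.cw i β) (βt i) (p ++ [(q, a')]) <
        V G.Zset (G.recordFrom i []) (G.cw i β) (βt i) (p ++ [(q, a'')]) → βt i q a' = 0 := by
    intro p q hq a' ha' a'' ha'' hV
    by_cases hp : p = G.rc i q
    · subst hp
      change G.Val i β (βt i) _ < G.Val i β (βt i) _ at hV
      rw [← G.uCond_eq hPR i q hq a' ha' β βt μ hμ2,
        ← G.uCond_eq hPR i q hq a'' ha'' β βt μ hμ2] at hV
      have hS : 0 ≤ G.SInfo i q β := Finset.sum_nonneg fun h hh =>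
        G.prodAlongNot_nonneg i β hβ.1 [] h ((G.info_spec i q h hq).1 hh).1
      exact h2 i q hq a' ha' a'' ha'' (lt_of_mul_lt_mul_left hV hS)
    · rw [V_off _ _ _ (G.m i) (G.infoA i) (G.rc i) hr _ _ _ _ hp,
        V_off _ _ _ (G.m i) (G.infoA i) (G.rc i) hr _ _ _ _ hp] at hV
      exact absurd hV (lt_irrefl _)
  have hnil : V G.Zset (G.recordFrom i []) (G.cw i β) (βt i) [] ≤
      V G.Zset (G.recordFrom i []) (G.cw i β) (β i) [] := by
    have h := hβ.2 i (βt i) (hbt i)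
    rw [G.uExp_eq i β β (fun _ _ => rfl), G.uExp_eq i β (G.replace β i (βt i))
      (fun p hp => by simp [replace, hp])] at h
    simpa [replace, Val] using h
  rw [G.uWedgeAct_eq hPR i j hj a' ha', G.uWedgeAct_eq hPR i j hj a'' ha''] at hlt
  have hrcmem : ∀ x ∈ G.rc i j, x.1 < G.m i ∧ x.2 ∈ G.infoA i x.1 := by
    rintro ⟨q, b⟩ hx
    obtain ⟨h, hh⟩ := G.info_nonempty i j hj
    rw [← G.rc_eq hPR i j hj h hh] at hx
    obtain ⟨l1, l2, e⟩ := List.append_of_mem hx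
    obtain ⟨e1, e2, _⟩ := G.record_entry hPR i h ((G.info_spec i j h hj).1 hh).1 l1 q b l2 e
    exact ⟨e1, e2⟩
  have hw0 : 0 ≤ wt (β i) (G.rc i j) := by
    refine List.prod_nonneg ?_
    intro y hy
    obtain ⟨x, hx, rfl⟩ := List.mem_map.1 hy
    obtain ⟨e1, e2⟩ := hrcmem x hx
    exact (hβ.1 i x.1 e1).1 x.2 e2
  have hwne : wt (β i) (G.rc i j) ≠ 0 := by
    intro h; rw [h] at hlt; simp at hlt
  have hV := lt_of_mul_lt_mul_left hlt hw0
  by_contra hne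
  have hgood := good_all _ _ _ (G.m i) (G.infoA i) (G.rc i) hr (βt i) (hbt i) hone (β i)
    (hβ.1 i) hnil (G.rc i j) hrcmem hwne
  have := (good_step _ _ _ (G.m i) (G.infoA i) (G.rc i) hr (βt i) (hbt i) hone (β i)
    (hβ.1 i) (G.rc i j) hgood j hj a' ha' hne).2 a'' ha''
  exact absurd hV (not_lt.2 this)

end EFG

/-- If `β*` is a Nash equilibrium in behavioral strategies, then there exist an extra
behavioral strategy profile `β̃*` and a belief system `μ*` satisfying the Nash
characterization. -/
theorem stmt4 (G : EFG) (hPR : G.PerfectRecall)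
    (β : G.Profile) (hβ : G.IsNash β) :
    ∃ (βt : G.Profile) (μ : G.Belief), G.IsBehProfile βt ∧ G.NashChar β βt μ := by
  exact G.nash_main hPR β hβ
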